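/- arXiv:2604.23863 — 5 statements merged into one kernel-verified Lean document; each statement's English description precedes it below -/
import Mathlib

section
/- If A ⊆ X is control invariant and A ⊆ {x | 0 ≤ l x}, then A ⊆ S. That is, any control-invariant set contained in the constraint set is contained in the safe set. -/
/-- Discrete-time trajectory under dynamics `f`, initial state `x`, controls `u`. -/
def traj {X U : Type*} (f : X → U → X) (x : X) (u : ℕ → U) : ℕ → X
  | 0 => x
  | n + 1 => f (traj f x u n) (u n)

/-- The safe set: states from which some control sequence keeps `l ≥ 0` forever. -/
def safeSet {X U : Type*} (f : X → U → X) (l : X → ℝ) : Set X :=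
  {x | ∃ u : ℕ → U, ∀ n : ℕ, 0 ≤ l (traj f x u n)}

section

variable {X U : Type*} {f : X → U → X} {A : Set X}

/-- The autonomous dynamics obtained from `f` by applying the state-feedback law `κ`. -/
def closedLoop (f : X → U → X) (κ : X → U) (x : X) : X :=
  f x (κ x)

theorem traj_feedback (f : X → U → X) (κ : X → U) (x : X) (n : ℕ) :
    traj f x (fun k => κ ((closedLoop f κ)^[k] x)) n = (closedLoop f κ)^[n] x := by
  induction n with
  | zero => rfl
  | succ n ih => rw [traj, ih, Function.iterate_succ_apply', closedLoop]

/-- Control invariance of `A`: from each state of `A`, some control keeps the next state in `A`. -/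
def ControlInvariant (f : X → U → X) (A : Set X) : Prop :=
  ∀ x ∈ A, ∃ v : U, f x v ∈ A

namespace ControlInvariant

theorem exists_mapsTo_closedLoop (hA : ControlInvariant f A) (hne : A.Nonempty) :
    ∃ κ : X → U, Set.MapsTo (closedLoop f κ) A A := by
  obtain ⟨x, hx⟩ := hne
  obtain ⟨v, -⟩ := hA x hx
  have : Nonempty U := ⟨v⟩
  choose! κ hκ using hA
  exact ⟨κ, hκ⟩

theorem exists_forall_traj_mem (hA : ControlInvariant f A) {x : X} (hx : x ∈ A) :
    ∃ u : ℕ → U, ∀ n, traj f x u n ∈ A := by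
  obtain ⟨κ, hκ⟩ := hA.exists_mapsTo_closedLoop ⟨x, hx⟩
  refine ⟨fun k => κ ((closedLoop f κ)^[k] x), fun n => ?_⟩
  rw [traj_feedback]
  exact hκ.iterate n hx

end ControlInvariant

end

/-- Any control-invariant set contained in the constraint set is contained in the safe set. -/
theorem controlInvariant_subset_safeSet {X U : Type*} (f : X → U → X) (l : X → ℝ)
    (A : Set X) (hInv : ∀ x ∈ A, ∃ v : U, f x v ∈ A)
    (hCons : A ⊆ {x | 0 ≤ l x}) :
    A ⊆ safeSet f l := by
  intro x hx
  have hA : ControlInvariant f A := hInv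
  obtain ⟨u, hu⟩ := hA.exists_forall_traj_mem hx
  exact ⟨u, fun n => hCons (hu n)⟩
end

section
/- The safe set satisfies the fixed-point characterization S = {x | 0 ≤ l x ∧ ∃ v : U, f x v ∈ S}: a state is safe if and only if it satisfies the state constraint and some admissible control maps it in one step to a safe state. -/
section Trajectory

variable {X U : Type*} (f : X → U → X) (x : X) (u : ℕ → U)

theorem traj_succ' (n : ℕ) :
    traj f x u (n + 1) = traj f (f x (u 0)) (fun k ↦ u (k + 1)) n := by
  induction n with
  | zero => rfl
  | succ n ih => exact congrArg (f · (u (n + 1))) ih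

theorem forall_traj_iff (p : X → Prop) :
    (∀ n, p (traj f x u n)) ↔
      p x ∧ ∀ n, p (traj f (f x (u 0)) (fun k ↦ u (k + 1)) n) := by
  simp only [← traj_succ']
  exact Nat.and_forall_add_one.symm

end Trajectory

/-- Fixed-point characterization of the safe set: a state is safe iff it satisfies the
state constraint and some control maps it in one step to a safe state. -/
theorem safeSet_fixed_point {X U : Type*} (f : X → U → X) (l : X → ℝ) :
    safeSet f l = {x | 0 ≤ l x ∧ ∃ v : U, f x v ∈ safeSet f l} := by
  ext x
  constructor
  · rintro ⟨u, hu⟩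
    obtain ⟨hx, htail⟩ := (forall_traj_iff f x u (0 ≤ l ·)).mp hu
    exact ⟨hx, u 0, fun n ↦ u (n + 1), htail⟩
  · rintro ⟨hx, v, u, hu⟩
    let consControl : ℕ → U := fun n ↦ Nat.casesOn n v u
    exact ⟨consControl, (forall_traj_iff f x consControl (0 ≤ l ·)).mpr ⟨hx, hu⟩⟩
end

section
/- Feasibility at safe states: if x ∈ S, then for every planning horizon h : ℕ the Safety Value MPC problem is feasible at x; in fact there exists u : ℕ → U such that 0 ≤ l (traj x u k) for all k < h, traj x u h ∈ S, and moreover traj x u k ∈ S for all k. -/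
/-- MPC feasibility for planning horizon `h`: some control keeps the constraint satisfied
for the first `h` steps and steers the terminal state into the safe set. -/
def MPCFeasible {X U : Type*} (f : X → U → X) (l : X → ℝ) (h : ℕ) (x : X) : Prop :=
  ∃ u : ℕ → U, (∀ k < h, 0 ≤ l (traj f x u k)) ∧ traj f x u h ∈ safeSet f l

section Shift

variable {X U : Type*} {f : X → U → X} {x : X} {u : ℕ → U}

theorem traj_add (m n : ℕ) :
    traj f x u (m + n) = traj f (traj f x u m) (fun i ↦ u (m + i)) n := by
  induction n with
  | zero => rfl
  | succ n ih => exact congrArg (f · (u (m + n))) ih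

theorem traj_mem_safeSet_of_forall_ge {l : X → ℝ} {m : ℕ}
    (hu : ∀ n ≥ m, 0 ≤ l (traj f x u n)) :
    traj f x u m ∈ safeSet f l :=
  ⟨fun i ↦ u (m + i), fun n ↦ traj_add m n ▸ hu (m + n) (m.le_add_right n)⟩

end Shift

/-- Feasibility at safe states: if `x ∈ S` then for every horizon `h` the Safety Value MPC
problem is feasible at `x`, with a plan whose entire trajectory stays in the safe set. -/
theorem mpcFeasible_of_mem_safeSet {X U : Type*} (f : X → U → X) (l : X → ℝ)
    (x : X) (hx : x ∈ safeSet f l) (h : ℕ) :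
    ∃ u : ℕ → U, (∀ k < h, 0 ≤ l (traj f x u k)) ∧ traj f x u h ∈ safeSet f l ∧
      ∀ k : ℕ, traj f x u k ∈ safeSet f l := by
  obtain ⟨u, hu⟩ := hx
  have traj_mem (k : ℕ) : traj f x u k ∈ safeSet f l :=
    traj_mem_safeSet_of_forall_ge fun n _ ↦ hu n
  exact ⟨u, fun k _ ↦ hu k, traj_mem h, traj_mem⟩
end

section
/- Level-set characterization of the safe set under attainment: suppose that for every x : X the supremum defining V is attained, i.e. there exists u* : ℕ → U with V x = ⨅ (n : ℕ), ((l (traj x u* n) : ℝ) : EReal). Then the super-zero level set of the safety value function equals the safe set: {x | 0 ≤ V x} = S. -/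
/-- The (converged) safety value function. -/
noncomputable def safetyValue {X U : Type*} (f : X → U → X) (l : X → ℝ) (x : X) : EReal :=
  ⨆ (u : ℕ → U), ⨅ (n : ℕ), ((l (traj f x u n) : ℝ) : EReal)

section

variable {X U : Type*} {f : X → U → X} {l : X → ℝ} {x : X}

/-- The safety margin of a control sequence: the infimum of `l` along its trajectory, i.e. the
payoff that `safetyValue` maximizes over control sequences. It lives in `EReal` so that
trajectories on which `l` is unbounded below have margin `⊥`. -/
noncomputable def safetyMargin (f : X → U → X) (l : X → ℝ) (x : X) (u : ℕ → U) : EReal :=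
  ⨅ n : ℕ, (l (traj f x u n) : EReal)

theorem safetyValue_eq_iSup_safetyMargin : safetyValue f l x = ⨆ u, safetyMargin f l x u :=
  rfl

theorem safetyMargin_le_safetyValue (u : ℕ → U) : safetyMargin f l x u ≤ safetyValue f l x :=
  le_iSup (safetyMargin f l x) u

theorem mem_safeSet_iff_exists_safetyMargin_nonneg :
    x ∈ safeSet f l ↔ ∃ u, 0 ≤ safetyMargin f l x u := by
  simp only [safeSet, safetyMargin, Set.mem_ofPred_eq, le_iInf_iff, EReal.coe_nonneg]

theorem safetyValue_nonneg_of_mem_safeSet (hx : x ∈ safeSet f l) : 0 ≤ safetyValue f l x :=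
  let ⟨u, hu⟩ := mem_safeSet_iff_exists_safetyMargin_nonneg.mp hx
  hu.trans (safetyMargin_le_safetyValue u)

theorem mem_safeSet_of_safetyValue_pos (hx : 0 < safetyValue f l x) : x ∈ safeSet f l := by
  rw [safetyValue_eq_iSup_safetyMargin] at hx
  obtain ⟨u, hu⟩ := lt_iSup_iff.mp hx
  exact mem_safeSet_iff_exists_safetyMargin_nonneg.mpr ⟨u, hu.le⟩

theorem mem_safeSet_iff_exists_safetyValue_eq_safetyMargin (hx : safetyValue f l x = 0) :
    x ∈ safeSet f l ↔ ∃ u, safetyValue f l x = safetyMargin f l x u := by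
  simp only [mem_safeSet_iff_exists_safetyMargin_nonneg, ← hx,
    (safetyMargin_le_safetyValue _).ge_iff_eq']

end

theorem levelSet_safetyValue_eq_safeSet_general {X U : Type*} (f : X → U → X) (l : X → ℝ) :
    {x : X | 0 ≤ safetyValue f l x} = safeSet f l ↔
      ∀ x : X, safetyValue f l x = 0 → ∃ u : ℕ → U, safetyValue f l x = safetyMargin f l x u := by
  constructor
  · intro hEq x hx
    have hsafe : x ∈ safeSet f l := hEq.subset hx.ge
    exact (mem_safeSet_iff_exists_safetyValue_eq_safetyMargin hx).mp hsafe
  · intro hAttain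
    ext x
    refine ⟨fun hx : 0 ≤ safetyValue f l x ↦ ?_, safetyValue_nonneg_of_mem_safeSet⟩
    obtain hpos | hzero := hx.lt_or_eq
    · exact mem_safeSet_of_safetyValue_pos hpos
    · exact (mem_safeSet_iff_exists_safetyValue_eq_safetyMargin hzero.symm).mpr
        (hAttain x hzero.symm)

/-- Level-set characterization of the safe set under attainment of the supremum defining
the safety value function: the super-zero level set of `V` equals the safe set. -/
theorem levelSet_safetyValue_eq_safeSet {X U : Type*} (f : X → U → X) (l : X → ℝ)
    (hAttain : ∀ x : X, ∃ u : ℕ → U,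
      safetyValue f l x = ⨅ (n : ℕ), ((l (traj f x u n) : ℝ) : EReal)) :
    {x : X | 0 ≤ safetyValue f l x} = safeSet f l :=
  (levelSet_safetyValue_eq_safeSet_general f l).mpr fun x _ ↦ hAttain x
end

section
/- Horizon-independence of recursive feasibility: for any two planning horizons h₁ h₂ : ℕ, a state x is MPC-feasible for horizon h₁ if and only if it is MPC-feasible for horizon h₂. Hence safety of the Safety Value MPC feasible set does not depend on the length of the planning horizon. -/
/-! Safety and feasibility satisfy the same dynamic-programming recursion: a state has the property
exactly when it meets the constraint and some control leads to a state that has it, the horizon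
dropping by one in the case of feasibility. Feasibility for horizon `0` is safety, so by induction
feasibility for every horizon is safety. -/

section

variable {X U : Type*} {f : X → U → X} {l : X → ℝ} {x : X} {h : ℕ}

theorem traj_succ_eq_traj_tail (f : X → U → X) (x : X) (u : ℕ → U) (n : ℕ) :
    traj f x u (n + 1) = traj f (f x (u 0)) (fun k => u (k + 1)) n := by
  induction n with
  | zero => rfl
  | succ n ih => exact congrArg (f · (u (n + 1))) ih

theorem exists_traj_tail_iff {P : (ℕ → X) → Prop} :
    (∃ u : ℕ → U, P fun n => traj f x u (n + 1)) ↔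
      ∃ (a : U) (v : ℕ → U), P (traj f (f x a) v) := by
  simp only [traj_succ_eq_traj_tail]
  constructor
  · rintro ⟨u, hu⟩
    exact ⟨u 0, fun k => u (k + 1), hu⟩
  · rintro ⟨a, v, hv⟩
    exact ⟨Nat.rec a fun k _ => v k, hv⟩

theorem mem_safeSet_iff_exists_step :
    x ∈ safeSet f l ↔ 0 ≤ l x ∧ ∃ a, f x a ∈ safeSet f l :=
  calc
    x ∈ safeSet f l
      ↔ ∃ u : ℕ → U, 0 ≤ l x ∧ ∀ n, 0 ≤ l (traj f x u (n + 1)) :=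
        exists_congr fun _ => Nat.and_forall_add_one.symm
    _ ↔ 0 ≤ l x ∧ ∃ u : ℕ → U, ∀ n, 0 ≤ l (traj f x u (n + 1)) := exists_and_left
    _ ↔ 0 ≤ l x ∧ ∃ a, f x a ∈ safeSet f l :=
        and_congr_right' (exists_traj_tail_iff (P := fun y => ∀ n, 0 ≤ l (y n)))

theorem mpcFeasible_zero_iff : MPCFeasible f l 0 x ↔ x ∈ safeSet f l := by
  constructor
  · rintro ⟨_, -, hx⟩
    exact hx
  · rintro ⟨u, hu⟩
    exact ⟨u, by simp, u, hu⟩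

theorem mpcFeasible_succ_iff :
    MPCFeasible f l (h + 1) x ↔ 0 ≤ l x ∧ ∃ a, MPCFeasible f l h (f x a) :=
  calc
    MPCFeasible f l (h + 1) x
      ↔ ∃ u : ℕ → U, 0 ≤ l x ∧
          (∀ k < h, 0 ≤ l (traj f x u (k + 1))) ∧ traj f x u (h + 1) ∈ safeSet f l :=
        exists_congr fun _ => (and_congr_left' Nat.forall_lt_succ_left).trans and_assoc
    _ ↔ 0 ≤ l x ∧ ∃ u : ℕ → U,
          (∀ k < h, 0 ≤ l (traj f x u (k + 1))) ∧ traj f x u (h + 1) ∈ safeSet f l :=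
        exists_and_left
    _ ↔ 0 ≤ l x ∧ ∃ a, MPCFeasible f l h (f x a) :=
        and_congr_right' (exists_traj_tail_iff
          (P := fun y => (∀ k < h, 0 ≤ l (y k)) ∧ y h ∈ safeSet f l))

theorem mpcFeasible_iff_mem_safeSet : MPCFeasible f l h x ↔ x ∈ safeSet f l := by
  induction h generalizing x with
  | zero => exact mpcFeasible_zero_iff
  | succ h ih => simp only [mpcFeasible_succ_iff, ih, ← mem_safeSet_iff_exists_step]

end

/-- Horizon-independence of MPC feasibility: feasibility does not depend on the
planning horizon. -/
theorem mpcFeasible_horizon_independent {X U : Type*} (f : X → U → X) (l : X → ℝ)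
    (h₁ h₂ : ℕ) (x : X) :
    MPCFeasible f l h₁ x ↔ MPCFeasible f l h₂ x := by
  rw [mpcFeasible_iff_mem_safeSet, mpcFeasible_iff_mem_safeSet]
end
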